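/- arXiv:2407.10659 — 2 statements merged into one kernel-verified Lean document; each statement's English description precedes it below -/
import Mathlib

section
/- (Theorem 1 of the paper.) Let T > 0 and Z : ℝ → ℝ. Then Z is rough in the sense of Definition 1 (i.e., there exists τ < 1 such that R_n(Z) converges subsequentially to τ) if and only if there exists ρ < 0 such that ρ_n(Z) converges subsequentially to ρ. Moreover, in that case the two limits are related by ρ = τ − 1. -/
open Filter

noncomputable section

/-- Extension of `Z : ℝ → ℝ` by the conventions `Z t := Z 0` for `t < 0` and
`Z t := Z T` for `t > T`. -/
def Zext (T : ℝ) (Z : ℝ → ℝ) (t : ℝ) : ℝ :=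
  if t < 0 then Z 0 else if T < t then Z T else Z t

/-- Realized variance `RV^n_T(Z) = Σ_{i=1}^n (Z(iT/n) − Z((i−1)T/n))²`. -/
def RV (T : ℝ) (Z : ℝ → ℝ) (n : ℕ) : ℝ :=
  ∑ i ∈ Finset.Icc 1 n,
    (Zext T Z ((i : ℝ) * T / (n : ℝ)) - Zext T Z (((i : ℝ) - 1) * T / (n : ℝ))) ^ 2

/-- Coarse realized variance
`RV^{n,2}_T(Z) = (1/2) Σ_{i=0}^n (Z((i+1)T/n) − Z((i−1)T/n))²`. -/
def RV2 (T : ℝ) (Z : ℝ → ℝ) (n : ℕ) : ℝ :=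
  (1 / 2) * ∑ i ∈ Finset.range (n + 1),
    (Zext T Z (((i : ℝ) + 1) * T / (n : ℝ)) - Zext T Z (((i : ℝ) - 1) * T / (n : ℝ))) ^ 2

/-- The first-order autocovariance sum
`Σ_{i=1}^{n−1} (Z((i+1)T/n) − Z(iT/n))·(Z(iT/n) − Z((i−1)T/n))`. -/
def crossSum (T : ℝ) (Z : ℝ → ℝ) (n : ℕ) : ℝ :=
  ∑ i ∈ Finset.Icc 1 (n - 1),
    (Zext T Z (((i : ℝ) + 1) * T / (n : ℝ)) - Zext T Z ((i : ℝ) * T / (n : ℝ))) *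
      (Zext T Z ((i : ℝ) * T / (n : ℝ)) - Zext T Z (((i : ℝ) - 1) * T / (n : ℝ)))

/-- Variance ratio `R_n(Z) = RV^{n,2}_T(Z)/RV^n_T(Z)`, with the convention `0/0 := 2`
(note that `RV^n_T(Z) = 0` forces `RV^{n,2}_T(Z) = 0`). -/
def Rratio (T : ℝ) (Z : ℝ → ℝ) (n : ℕ) : ℝ :=
  if RV T Z n = 0 then 2 else RV2 T Z n / RV T Z n

/-- First-order sample autocorrelation `ρ_n(Z)` with the convention `0/0 := 1`
(note that `RV^n_T(Z) = 0` forces the numerator to vanish). -/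
def acf (T : ℝ) (Z : ℝ → ℝ) (n : ℕ) : ℝ :=
  if RV T Z n = 0 then 1 else crossSum T Z n / RV T Z n

/-- A real sequence `a` converges *subsequentially* to `l` if every subsequence has a
further subsequence converging to `l`. -/
def SubseqTendsto (a : ℕ → ℝ) (l : ℝ) : Prop :=
  ∀ φ : ℕ → ℕ, StrictMono φ →
    ∃ ψ : ℕ → ℕ, StrictMono ψ ∧ Tendsto (a ∘ φ ∘ ψ) atTop (nhds l)

/-- `Z` is rough (Definition 1): there exists `τ < 1` such that the variance ratio `R_n(Z)`
converges subsequentially to `τ`. -/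
def IsRough (T : ℝ) (Z : ℝ → ℝ) : Prop :=
  ∃ τ : ℝ, τ < 1 ∧ SubseqTendsto (fun n => Rratio T Z n) τ

/-!
With `d i = Z(iT/n) − Z((i−1)T/n)`, each coarse increment is `d (i+1) + d i`, and the constant
extension of `Z` outside `[0, T]` gives `d 0 = d (n+1) = 0`. Expanding the squares, every `d i ^ 2`
with `1 ≤ i ≤ n` occurs twice and every `d (i+1) * d i` with `1 ≤ i ≤ n − 1` once with coefficient
`2`, so the coarse realized variance is the realized variance plus the autocovariance sum. Hence
`R_n = ρ_n + 1` for every `n`, the `0/0` conventions being chosen to match.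
-/

theorem sum_range_succ_eq_sum_Icc_one {M : Type*} [AddCommMonoid M] {f : ℕ → M} (h₀ : f 0 = 0)
    (n : ℕ) : ∑ i ∈ Finset.range (n + 1), f i = ∑ i ∈ Finset.Icc 1 n, f i := by
  rw [Finset.sum_range_eq_add_Ico f n.add_one_pos, h₀, zero_add, Finset.Ico_add_one_right_eq_Icc]

theorem sum_add_sq_eq_of_endpoints_eq_zero {R : Type*} [CommSemiring R] {d : ℕ → R} {n : ℕ}
    (h₀ : d 0 = 0) (hn : d (n + 1) = 0) :
    ∑ i ∈ Finset.range (n + 1), (d (i + 1) + d i) ^ 2 =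
      2 * (∑ i ∈ Finset.Icc 1 n, d i ^ 2 + ∑ i ∈ Finset.Icc 1 (n - 1), d (i + 1) * d i) := by
  have h_sq : ∑ i ∈ Finset.range (n + 1), d i ^ 2 = ∑ i ∈ Finset.Icc 1 n, d i ^ 2 :=
    sum_range_succ_eq_sum_Icc_one (by simp [h₀]) n
  have h_sq_shift : ∑ i ∈ Finset.range (n + 1), d (i + 1) ^ 2 =
      ∑ i ∈ Finset.range (n + 1), d i ^ 2 := by
    have h := Finset.sum_range_succ' (fun i => d i ^ 2) (n + 1)
    rw [Finset.sum_range_succ] at h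
    simpa [h₀, hn] using h.symm
  have h_cross : ∑ i ∈ Finset.range (n + 1), d (i + 1) * d i =
      ∑ i ∈ Finset.Icc 1 (n - 1), d (i + 1) * d i := by
    rw [Finset.sum_range_succ, hn, zero_mul, add_zero]
    cases n with
    | zero => simp
    | succ m => exact sum_range_succ_eq_sum_Icc_one (by simp [h₀]) m
  calc ∑ i ∈ Finset.range (n + 1), (d (i + 1) + d i) ^ 2
      = ∑ i ∈ Finset.range (n + 1), d (i + 1) ^ 2 +
          2 * ∑ i ∈ Finset.range (n + 1), d (i + 1) * d i +
          ∑ i ∈ Finset.range (n + 1), d i ^ 2 := by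
        simp only [add_sq, Finset.sum_add_distrib, Finset.mul_sum, mul_assoc]
    _ = 2 * (∑ i ∈ Finset.Icc 1 n, d i ^ 2 +
          ∑ i ∈ Finset.Icc 1 (n - 1), d (i + 1) * d i) := by
        rw [h_sq_shift, h_sq, h_cross]
        ring

theorem subseqTendsto_iff_tendsto {a : ℕ → ℝ} {l : ℝ} :
    SubseqTendsto a l ↔ Tendsto a atTop (nhds l) := by
  refine ⟨fun h => tendsto_of_subseq_tendsto fun ns hns => ?_,
    fun h φ hφ => ⟨id, strictMono_id, h.comp hφ.tendsto_atTop⟩⟩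
  obtain ⟨φ, -, hφ⟩ := strictMono_subseq_of_tendsto_atTop hns
  obtain ⟨ψ, -, hψ⟩ := h (ns ∘ φ) hφ
  exact ⟨φ ∘ ψ, hψ⟩

/-- The increment `Z(iT/n) − Z((i−1)T/n)` of the extended path, from which all three sums are built.
The index is not restricted to `1 ≤ i ≤ n`: `increment T Z n 0` and `increment T Z n (n + 1)` are
the increments over the intervals adjacent to `[0, T]`. -/
def increment (T : ℝ) (Z : ℝ → ℝ) (n i : ℕ) : ℝ :=
  Zext T Z ((i : ℝ) * T / (n : ℝ)) - Zext T Z (((i : ℝ) - 1) * T / (n : ℝ))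

section

variable {T : ℝ} (Z : ℝ → ℝ) (n : ℕ)

theorem Zext_of_nonpos (hT : 0 ≤ T) {t : ℝ} (ht : t ≤ 0) : Zext T Z t = Z 0 := by
  rcases ht.lt_or_eq with ht | rfl
  · rw [Zext, if_pos ht]
  · rw [Zext, if_neg (lt_irrefl 0), if_neg hT.not_gt]

theorem Zext_of_le (hT : 0 ≤ T) {t : ℝ} (ht : T ≤ t) : Zext T Z t = Z T := by
  rw [Zext, if_neg (hT.trans ht).not_gt]
  rcases ht.lt_or_eq with ht | rfl
  · rw [if_pos ht]
  · rw [if_neg (lt_irrefl T)]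

theorem increment_zero (hT : 0 ≤ T) : increment T Z n 0 = 0 := by
  have h_left : ((0 : ℕ) - 1 : ℝ) * T / n ≤ 0 :=
    div_nonpos_of_nonpos_of_nonneg (by simpa using hT) n.cast_nonneg
  rw [increment, Zext_of_nonpos Z hT h_left, Zext_of_nonpos Z hT (by simp), sub_self]

theorem increment_succ_self (hT : 0 ≤ T) : increment T Z n (n + 1) = 0 := by
  rcases n.eq_zero_or_pos with rfl | hn
  · -- Division by `n = 0` collapses the whole grid to the point `0`.
    simp [increment]
  have hn' : (0 : ℝ) < n := Nat.cast_pos.2 hn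
  have h_end : (((n + 1 : ℕ) : ℝ) - 1) * T / n = T := by
    push_cast
    field_simp
    ring
  have h_right : T ≤ ((n + 1 : ℕ) : ℝ) * T / n := by
    rw [le_div_iff₀ hn']
    push_cast
    linarith
  rw [increment, h_end, Zext_of_le Z hT h_right, Zext_of_le Z hT le_rfl, sub_self]

variable (T)

theorem RV_eq_sum_increment_sq : RV T Z n = ∑ i ∈ Finset.Icc 1 n, increment T Z n i ^ 2 :=
  rfl

theorem crossSum_eq_sum_increment_mul :
    crossSum T Z n = ∑ i ∈ Finset.Icc 1 (n - 1), increment T Z n (i + 1) * increment T Z n i := by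
  simp only [crossSum, increment, Nat.cast_add_one, add_sub_cancel_right]

theorem RV2_eq_sum_increment_add_sq :
    RV2 T Z n =
      (1 / 2) * ∑ i ∈ Finset.range (n + 1), (increment T Z n (i + 1) + increment T Z n i) ^ 2 := by
  simp only [RV2, increment, Nat.cast_add_one, add_sub_cancel_right, sub_add_sub_cancel]

variable {T}

theorem RV2_eq_RV_add_crossSum (hT : 0 ≤ T) : RV2 T Z n = RV T Z n + crossSum T Z n := by
  rw [RV2_eq_sum_increment_add_sq, RV_eq_sum_increment_sq, crossSum_eq_sum_increment_mul,
    sum_add_sq_eq_of_endpoints_eq_zero (increment_zero Z n hT) (increment_succ_self Z n hT)]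
  ring

theorem Rratio_eq_acf_add_one (hT : 0 ≤ T) : Rratio T Z n = acf T Z n + 1 := by
  unfold Rratio acf
  split_ifs with hRV
  · norm_num
  · rw [RV2_eq_RV_add_crossSum Z n hT, add_div, div_self hRV, add_comm]

theorem subseqTendsto_Rratio_iff (hT : 0 ≤ T) {τ : ℝ} :
    SubseqTendsto (fun n => Rratio T Z n) τ ↔ SubseqTendsto (fun n => acf T Z n) (τ - 1) := by
  simp only [subseqTendsto_iff_tendsto, Rratio_eq_acf_add_one Z _ hT]
  rw [← tendsto_add_const_iff 1 (c := τ - 1), sub_add_cancel]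

end

/-- Theorem 1 of the paper: `Z` is rough if and only if there exists `ρ < 0`
such that `ρ_n(Z)` converges subsequentially to `ρ`; moreover the two limits are related by
`ρ = τ − 1`. -/
theorem stmt2 (T : ℝ) (hT : 0 < T) (Z : ℝ → ℝ) :
    (IsRough T Z ↔ ∃ ρ : ℝ, ρ < 0 ∧ SubseqTendsto (fun n => acf T Z n) ρ) ∧
    (∀ τ ρ : ℝ, SubseqTendsto (fun n => Rratio T Z n) τ →
      SubseqTendsto (fun n => acf T Z n) ρ → ρ = τ - 1) := by
  refine ⟨⟨?_, ?_⟩, fun τ ρ hτ hρ => ?_⟩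
  · rintro ⟨τ, hτ, h⟩
    exact ⟨τ - 1, sub_neg.2 hτ, (subseqTendsto_Rratio_iff Z hT.le).1 h⟩
  · rintro ⟨ρ, hρ, h⟩
    exact ⟨ρ + 1, by linarith, (subseqTendsto_Rratio_iff Z hT.le).2 (by rwa [add_sub_cancel_right])⟩
  · have hτ' := (subseqTendsto_Rratio_iff Z hT.le).1 hτ
    exact tendsto_nhds_unique (subseqTendsto_iff_tendsto.1 hρ) (subseqTendsto_iff_tendsto.1 hτ')

end
end

section
/- (Scaling bound for the fractional kernel, the key estimate in eq. (rough-mom).) Let H ∈ (0, 1/2), t ≥ 0 and Δ > 0. Then ∫_0^{t+Δ} ((t+Δ−s)_+^{H−1/2} − (t−s)_+^{H−1/2})² ds = Δ^{2H} · ∫_0^{(t+Δ)/Δ} (u^{H−1/2} − (u−1)_+^{H−1/2})² du, and hence ∫_0^{t+Δ} ((t+Δ−s)_+^{H−1/2} − (t−s)_+^{H−1/2})² ds ≤ Δ^{2H} · I_H. -/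
open MeasureTheory Set

noncomputable section

/-- The truncated power `x ↦ x₊^{H−1/2}`: equal to `x^{H−1/2}` (real power) for `x > 0`
and to `0` for `x ≤ 0`. -/
def pplus (H x : ℝ) : ℝ := if 0 < x then x ^ (H - 1 / 2) else 0

/-- The integral `I_H = ∫_0^∞ (s^{H−1/2} − (s−1)₊^{H−1/2})² ds`. -/
def IH (H : ℝ) : ℝ := ∫ s in Ioi (0 : ℝ), (pplus H s - pplus H (s - 1)) ^ 2

/-- The normalizing constant `K_H = Γ(H+1/2)/√(sin(πH)·Γ(2H+1))` of the fractional
kernel. -/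
def KH (H : ℝ) : ℝ :=
  Real.Gamma (H + 1 / 2) / Real.sqrt (Real.sin (Real.pi * H) * Real.Gamma (2 * H + 1))

/-! The truncated power is homogeneous of degree `H - 1 / 2`, so the substitution
`u = (t + Δ - s) / Δ` gives the identity, with factor `Δ ^ (2 * (H - 1 / 2)) * Δ = Δ ^ (2 * H)`.
The bound extends the domain of a nonnegative integrand, which is meaningful because the increments
of the truncated power are square integrable: each term is locally in `L²` when `0 < H`, while at
infinity the mean value theorem makes the increment `O(u ^ (H - 3 / 2))`, square integrable when
`H < 1`. -/

lemma sq_rpow_sub_half {x : ℝ} (hx : 0 ≤ x) (r : ℝ) : (x ^ (r - 1 / 2)) ^ 2 = x ^ (2 * r - 1) := by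
  rw [← Real.rpow_mul_natCast hx]
  congr 1
  push_cast
  ring

lemma abs_rpow_sub_rpow_le {x y a : ℝ} (hx : 0 < x) (hxy : x ≤ y) (ha : a ≤ 1) :
    |y ^ a - x ^ a| ≤ |a| * x ^ (a - 1) * (y - x) := by
  have hasDeriv : ∀ z ∈ Icc x y, HasDerivWithinAt (· ^ a) (a * z ^ (a - 1)) (Icc x y) z :=
    fun z hz => (Real.hasDerivAt_rpow_const (.inl (hx.trans_le hz.1).ne')).hasDerivWithinAt
  have deriv_le : ∀ z ∈ Icc x y, ‖a * z ^ (a - 1)‖ ≤ |a| * x ^ (a - 1) := fun z hz => by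
    rw [norm_mul, Real.norm_eq_abs,
      Real.norm_of_nonneg (Real.rpow_nonneg (hx.le.trans hz.1) _)]
    gcongr ?_ * ?_
    exact Real.rpow_le_rpow_of_nonpos hx hz.1 (by linarith)
  have mean_value := (convex_Icc x y).norm_image_sub_le_of_norm_hasDerivWithin_le hasDeriv deriv_le
    (left_mem_Icc.2 hxy) (right_mem_Icc.2 hxy)
  rwa [Real.norm_eq_abs, Real.norm_of_nonneg (sub_nonneg.2 hxy)] at mean_value

lemma setIntegral_Ioc_comp_sub_div {E : Type*} [NormedAddCommGroup E] [NormedSpace ℝ E]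
    (f : ℝ → E) (T : ℝ) {d : ℝ} (hd : 0 < d) :
    ∫ s in Ioc 0 T, f (T / d - s / d) = d • ∫ u in Ioc 0 (T / d), f u := by
  rcases le_total T 0 with hT | hT
  · simp only [Ioc_eq_empty_of_le hT, Ioc_eq_empty_of_le (div_nonpos_of_nonpos_of_nonneg hT hd.le),
      Measure.restrict_empty, integral_zero_measure, smul_zero]
  · rw [← intervalIntegral.integral_of_le hT,
      ← intervalIntegral.integral_of_le (div_nonneg hT hd.le),
      intervalIntegral.integral_comp_sub_div f hd.ne', sub_self, zero_div, sub_zero]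

section TruncatedPower

variable {H : ℝ}

lemma pplus_of_pos {x : ℝ} (hx : 0 < x) : pplus H x = x ^ (H - 1 / 2) :=
  if_pos hx

lemma pplus_of_nonpos {x : ℝ} (hx : x ≤ 0) : pplus H x = 0 :=
  if_neg hx.not_gt

lemma measurable_pplus (H : ℝ) : Measurable (pplus H) :=
  .ite measurableSet_Ioi (by fun_prop) measurable_const

lemma pplus_mul {d : ℝ} (hd : 0 < d) (x : ℝ) :
    pplus H (d * x) = d ^ (H - 1 / 2) * pplus H x := by
  rcases le_or_gt x 0 with hx | hx
  · rw [pplus_of_nonpos hx, pplus_of_nonpos (mul_nonpos_of_nonneg_of_nonpos hd.le hx), mul_zero]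
  · rw [pplus_of_pos hx, pplus_of_pos (mul_pos hd hx), Real.mul_rpow hd.le hx.le]

lemma sq_pplus_mul_sub {d : ℝ} (hd : 0 < d) (x y : ℝ) :
    (pplus H (d * x) - pplus H (d * y)) ^ 2 = d ^ (2 * H - 1) * (pplus H x - pplus H y) ^ 2 := by
  rw [pplus_mul hd, pplus_mul hd, ← mul_sub, mul_pow, sq_rpow_sub_half hd.le]

lemma sq_pplus (x : ℝ) : pplus H x ^ 2 = (Ioi 0).indicator (fun x => x ^ (2 * H - 1)) x := by
  rcases le_or_gt x 0 with hx | hx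
  · rw [pplus_of_nonpos hx, indicator_of_notMem (notMem_Ioi.2 hx), zero_pow two_ne_zero]
  · rw [pplus_of_pos hx, indicator_of_mem (mem_Ioi.2 hx), sq_rpow_sub_half hx.le]

lemma memLp_two_pplus_Iic (hH : 0 < H) (c : ℝ) : MemLp (pplus H) 2 (volume.restrict (Iic c)) := by
  refine (memLp_two_iff_integrable_sq (measurable_pplus H).aestronglyMeasurable).2 ?_
  simp only [sq_pplus]
  rw [integrable_indicator_iff measurableSet_Ioi, IntegrableOn,
    Measure.restrict_restrict measurableSet_Ioi, Ioi_inter_Iic]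
  exact (intervalIntegral.intervalIntegrable_rpow' (by linarith)).1

lemma memLp_two_pplus_sub_right_Iic (hH : 0 < H) (c h : ℝ) :
    MemLp (fun u => pplus H (u - h)) 2 (volume.restrict (Iic c)) := by
  have shift := (measurePreserving_sub_right volume h).restrict_preimage
    (measurableSet_Iic (a := c - h))
  rw [preimage_sub_const_Iic, sub_add_cancel] at shift
  exact (memLp_two_pplus_Iic hH (c - h)).comp_measurePreserving shift

lemma sq_pplus_sub_le (hH : H ≤ 3 / 2) {h u : ℝ} (hh : 0 ≤ h) (hu : h < u) :
    (pplus H u - pplus H (u - h)) ^ 2 ≤ ((H - 1 / 2) * h) ^ 2 * (u - h) ^ (2 * H - 3) := by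
  have hx : 0 < u - h := sub_pos.2 hu
  have increment_le :
      |pplus H u - pplus H (u - h)| ≤ |H - 1 / 2| * (u - h) ^ (H - 1 / 2 - 1) * h := by
    rw [pplus_of_pos (hh.trans_lt hu), pplus_of_pos hx]
    simpa only [sub_sub_cancel] using
      abs_rpow_sub_rpow_le hx (sub_le_self u hh) (by linarith : H - 1 / 2 ≤ 1)
  calc (pplus H u - pplus H (u - h)) ^ 2
      ≤ (|H - 1 / 2| * (u - h) ^ (H - 1 / 2 - 1) * h) ^ 2 :=
        sq_le_sq.2 (increment_le.trans (le_abs_self _))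
    _ = ((H - 1 / 2) * h) ^ 2 * ((u - h) ^ (H - 1 - 1 / 2)) ^ 2 := by
        rw [sub_right_comm H, mul_right_comm, mul_pow, mul_pow |H - 1 / 2|, sq_abs, mul_pow]
    _ = ((H - 1 / 2) * h) ^ 2 * (u - h) ^ (2 * H - 3) := by
        rw [sq_rpow_sub_half hx.le, show 2 * (H - 1) - 1 = 2 * H - 3 by ring]

lemma integrable_sq_pplus_sub (hH0 : 0 < H) (hH1 : H < 1) {h : ℝ} (hh : 0 ≤ h) :
    Integrable fun u => (pplus H u - pplus H (u - h)) ^ 2 := by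
  have near : IntegrableOn (fun u => (pplus H u - pplus H (u - h)) ^ 2) (Iic (h + 1)) :=
    ((memLp_two_pplus_Iic hH0 _).sub (memLp_two_pplus_sub_right_Iic hH0 _ h)).integrable_sq
  have far : IntegrableOn (fun u => (pplus H u - pplus H (u - h)) ^ 2) (Ioi (h + 1)) := by
    have majorant :
        IntegrableOn (fun u => ((H - 1 / 2) * h) ^ 2 * (u - h) ^ (2 * H - 3)) (Ioi (h + 1)) :=
      (integrableOn_add_rpow_Ioi_of_lt (m := -h) (by linarith) (by linarith)).const_mul _
    refine majorant.mono' ?_ (ae_restrict_of_forall_mem measurableSet_Ioi fun u hu => ?_)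
    · have := measurable_pplus H
      fun_prop
    · rw [Real.norm_of_nonneg (sq_nonneg _)]
      exact sq_pplus_sub_le (by linarith) hh ((lt_add_one h).trans hu)
  rw [← integrableOn_univ, ← Iic_union_Ioi]
  exact near.union far

lemma setIntegral_sq_pplus_sub_scaling (H t : ℝ) {Δ : ℝ} (hΔ : 0 < Δ) :
    ∫ s in Ioc 0 (t + Δ), (pplus H (t + Δ - s) - pplus H (t - s)) ^ 2 =
      Δ ^ (2 * H) * ∫ u in Ioc 0 ((t + Δ) / Δ), (pplus H u - pplus H (u - 1)) ^ 2 := by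
  set f : ℝ → ℝ := fun u => (pplus H u - pplus H (u - 1)) ^ 2
  have rescale (s : ℝ) : (pplus H (t + Δ - s) - pplus H (t - s)) ^ 2 =
      Δ ^ (2 * H - 1) * f ((t + Δ) / Δ - s / Δ) := by
    have late : t + Δ - s = Δ * ((t + Δ) / Δ - s / Δ) := by field_simp
    have early : t - s = Δ * ((t + Δ) / Δ - s / Δ - 1) := by field_simp; ring
    rw [late, early, sq_pplus_mul_sub hΔ]
  calc ∫ s in Ioc 0 (t + Δ), (pplus H (t + Δ - s) - pplus H (t - s)) ^ 2
      = Δ ^ (2 * H - 1) * ∫ s in Ioc 0 (t + Δ), f ((t + Δ) / Δ - s / Δ) := by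
        simp only [rescale, integral_const_mul]
    _ = Δ ^ (2 * H - 1) * (Δ * ∫ u in Ioc 0 ((t + Δ) / Δ), f u) := by
        rw [setIntegral_Ioc_comp_sub_div f _ hΔ, smul_eq_mul]
    _ = Δ ^ (2 * H) * ∫ u in Ioc 0 ((t + Δ) / Δ), f u := by
        rw [← mul_assoc, ← Real.rpow_add_one hΔ.ne', sub_add_cancel]

lemma setIntegral_sq_pplus_sub_le_IH (hH0 : 0 < H) (hH1 : H < 1) (T : ℝ) :
    ∫ u in Ioc 0 T, (pplus H u - pplus H (u - 1)) ^ 2 ≤ IH H :=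
  setIntegral_mono_set (integrable_sq_pplus_sub hH0 hH1 zero_le_one).integrableOn
    (.of_forall fun _ => sq_nonneg _) Ioc_subset_Ioi_self.eventuallyLE

end TruncatedPower

theorem stmt10_general (H : ℝ) (hH0 : 0 < H) (hH1 : H < 1) (t : ℝ) (Δ : ℝ) (hΔ : 0 < Δ) :
    (∫ s in Ioc (0 : ℝ) (t + Δ), (pplus H (t + Δ - s) - pplus H (t - s)) ^ 2) =
      Δ ^ (2 * H) *
        ∫ u in Ioc (0 : ℝ) ((t + Δ) / Δ), (pplus H u - pplus H (u - 1)) ^ 2 ∧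
    (∫ s in Ioc (0 : ℝ) (t + Δ), (pplus H (t + Δ - s) - pplus H (t - s)) ^ 2) ≤
      Δ ^ (2 * H) * IH H := by
  have scaling := setIntegral_sq_pplus_sub_scaling H t hΔ
  refine ⟨scaling, scaling.trans_le ?_⟩
  gcongr
  exact setIntegral_sq_pplus_sub_le_IH hH0 hH1 _

/-- scaling bound for the fractional kernel, key estimate in eq. (rough-mom):
for `H ∈ (0, 1/2)`, `t ≥ 0` and `Δ > 0`,
`∫_0^{t+Δ} ((t+Δ−s)₊^{H−1/2} − (t−s)₊^{H−1/2})² ds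
  = Δ^{2H} · ∫_0^{(t+Δ)/Δ} (u^{H−1/2} − (u−1)₊^{H−1/2})² du ≤ Δ^{2H} · I_H`. -/
theorem stmt10 (H : ℝ) (hH0 : 0 < H) (hH : H < 1 / 2) (t : ℝ) (ht : 0 ≤ t)
    (Δ : ℝ) (hΔ : 0 < Δ) :
    (∫ s in Ioc (0 : ℝ) (t + Δ), (pplus H (t + Δ - s) - pplus H (t - s)) ^ 2) =
      Δ ^ (2 * H) *
        ∫ u in Ioc (0 : ℝ) ((t + Δ) / Δ), (pplus H u - pplus H (u - 1)) ^ 2 ∧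
    (∫ s in Ioc (0 : ℝ) (t + Δ), (pplus H (t + Δ - s) - pplus H (t - s)) ^ 2) ≤
      Δ ^ (2 * H) * IH H := by
  exact stmt10_general H hH0 (by linarith) t Δ hΔ

end
end
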